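/- For every d ∈ K_{2n} and all real numbers a and b, the span of all commutators XY − YX with X in span{ f_β : β ∈ Φ⁺, d(β) ≤ a } and Y in span{ f_β : β ∈ Φ⁺, d(β) ≤ b } (subspaces of the space of 2n×2n complex matrices) is contained in span{ f_β : β ∈ Φ⁺, d(β) ≤ a + b }. In other words, the subspaces (n₋)_{≤m}^d := span{ f_β : d(β) ≤ m } form an ℝ-filtration of the Lie algebra spanned by the root vectors f_β. -/

import Mathlib

/-- Index of a positive root of `sp_{2n}`: `(i, j, false)` encodes `α_{i,j}` with
`1 ≤ i ≤ j ≤ n`, and `(i, j, true)` encodes `α_{i,j̄}` with `1 ≤ i ≤ j ≤ n-1`. -/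
def IsSpRootIdx (n : ℕ) (t : ℕ × ℕ × Bool) : Prop :=
  1 ≤ t.1 ∧ t.1 ≤ t.2.1 ∧ t.2.1 ≤ n ∧ (t.2.2 = true → t.2.1 + 1 ≤ n)

instance (n : ℕ) (t : ℕ × ℕ × Bool) : Decidable (IsSpRootIdx n t) :=
  inferInstanceAs (Decidable (1 ≤ t.1 ∧ t.1 ≤ t.2.1 ∧ t.2.1 ≤ n ∧ (t.2.2 = true → t.2.1 + 1 ≤ n)))

/-- The set `Φ⁺` of positive roots of `sp_{2n}`. -/
def SpRoot (n : ℕ) : Type := {t : ℕ × ℕ × Bool // IsSpRootIdx n t}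

/-- Normalised root index, implementing the convention `α_{i,n̄} := α_{i,n}`. -/
def rIdx (n i j : ℕ) (b : Bool) : ℕ × ℕ × Bool :=
  if b = true ∧ j = n then (i, j, false) else (i, j, b)
/-- Evaluate `d ∈ ℝ^{Φ⁺}` on a root index (value `0` outside `Φ⁺`). -/
noncomputable def dval {n : ℕ} (d : SpRoot n → ℝ) (t : ℕ × ℕ × Bool) : ℝ :=
  if h : IsSpRootIdx n t then d ⟨t, h⟩ else 0

/-- `d_{i,j}`. -/
noncomputable def dA {n : ℕ} (d : SpRoot n → ℝ) (i j : ℕ) : ℝ := dval d (i, j, false)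

/-- `d_{i,j̄}`, with the convention `d_{i,n̄} = d_{i,n}`. -/
noncomputable def dB {n : ℕ} (d : SpRoot n → ℝ) (i j : ℕ) : ℝ := dval d (rIdx n i j true)
inductive FacetKind
  | A | B | C | D
  deriving DecidableEq

/-- Labels of the `n(n-1)` defining inequalities (facets) of `K_{2n}`. -/
def Facets (n : ℕ) : Set (FacetKind × ℕ × ℕ) :=
  {f | (f.1 = FacetKind.A ∧ 1 ≤ f.2.1 ∧ f.2.1 + 1 ≤ n ∧ f.2.2 = f.2.1 + 1) ∨
       (f.1 = FacetKind.B ∧ 1 ≤ f.2.1 ∧ f.2.1 < f.2.2 ∧ f.2.2 + 1 ≤ n) ∨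
       (f.1 = FacetKind.C ∧ 1 ≤ f.2.1 ∧ f.2.1 < f.2.2 ∧ f.2.2 + 1 ≤ n) ∨
       (f.1 = FacetKind.D ∧ 1 ≤ f.2.1 ∧ f.2.1 + 1 ≤ n ∧ f.2.2 = f.2.1 + 1)}

/-- Left-hand side of the defining inequality with a given label. -/
noncomputable def facetLhs {n : ℕ} (d : SpRoot n → ℝ) : FacetKind × ℕ × ℕ → ℝ
  | (FacetKind.A, i, _) => dA d i i + dA d (i+1) (i+1)
  | (FacetKind.B, i, j) => dA d i j + dA d (i+1) (j+1)
  | (FacetKind.C, i, j) => dB d i (j+1) + dB d (i+1) j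
  | (FacetKind.D, i, _) => 2 * dB d i (i+1)

/-- Right-hand side of the defining inequality with a given label. -/
noncomputable def facetRhs {n : ℕ} (d : SpRoot n → ℝ) : FacetKind × ℕ × ℕ → ℝ
  | (FacetKind.A, i, _) => dA d i (i+1)
  | (FacetKind.B, i, j) => dA d i (j+1) + dA d (i+1) j
  | (FacetKind.C, i, j) => dB d i j + dB d (i+1) (j+1)
  | (FacetKind.D, i, _) => dB d i i + dB d (i+1) (i+1)

/-- The symplectic FFLV degree cone `K_{2n} ⊆ ℝ^{Φ⁺}`. -/
def Kcone (n : ℕ) : Set (SpRoot n → ℝ) :=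
  {d | ∀ f ∈ Facets n, facetRhs d f ≤ facetLhs d f}

/-- Points of `ℝ^{Φ⁺}` satisfying every defining inequality of `K_{2n}` strictly. -/
def KconeStrict (n : ℕ) : Set (SpRoot n → ℝ) :=
  {d | ∀ f ∈ Facets n, facetRhs d f < facetLhs d f}

/-- The elementary `2n × 2n` matrix with a `1` in row `p`, column `q` (rows and columns
numbered `1, …, 2n`) and `0` elsewhere. -/
noncomputable def Emat (n p q : ℕ) : Matrix (Fin (2*n)) (Fin (2*n)) ℂ :=
  Matrix.of fun a b => if a.val + 1 = p ∧ b.val + 1 = q then 1 else 0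

/-- The root vectors `f_β` of `sp_{2n}` as `2n × 2n` matrices:
`f_{i,ī} = E_{ī,i}`, `f_{i,j} = E_{j+1,i} - E_{ī,(j+1)̄}` for `j < n`,
`f_{i,j̄} = E_{j̄,i} + E_{ī,j}` for `i < j`, with `ī := 2n+1-i`, and the root
`α_{i,n} = α_{i,n̄}` (for `i < n`) carrying the vector `f_{i,n̄}`. -/
noncomputable def fvec (n : ℕ) : ℕ × ℕ × Bool → Matrix (Fin (2*n)) (Fin (2*n)) ℂ
  | (i, j, false) =>
      if j < n then Emat n (j+1) i - Emat n (2*n+1-i) (2*n+1-(j+1))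
      else if i < n then Emat n (n+1) i + Emat n (2*n+1-i) n
      else Emat n (n+1) n
  | (i, j, true) =>
      if i = j then Emat n (2*n+1-i) i
      else Emat n (2*n+1-j) i + Emat n (2*n+1-i) j

/-- The standard basis vector `e_x` of `ℂ^{2n}` (coordinates numbered `1, …, 2n`). -/
noncomputable def evec (n x : ℕ) : Fin (2*n) → ℂ :=
  fun a => if a.val + 1 = x then 1 else 0

/-!
Place the degree of each root at the strictly lower triangular positions `(p, q)` occupied by its
root vector. The defining inequalities of `K_{2n}` then say precisely that this weight `w q p`,
extended by `0` to the diagonal, satisfies all adjacent Monge inequalities, and these add up to the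
triangle inequality `w q p ≤ w q r + w r p`. Hence the strictly lower triangular matrices supported
on entries of weight at most `m` multiply like a filtration. The span of the root vectors of degree
at most `m` is the intersection of this filtration with the Lie algebra of matrices that are
skew-adjoint for the symplectic form, so it inherits the filtration property for commutators.
-/

section Monge

variable {S : Type*} {l N : ℕ}

theorem sub_le_sub_of_monge_adjacent [Sub S] [Preorder S] {w : ℕ → ℕ → S}
    (hw : ∀ q p, l ≤ q → q < p → p < N →
      w q (p + 1) - w q p ≤ w (q + 1) (p + 1) - w (q + 1) p)
    {q r p : ℕ} (hq : l ≤ q) (hqr : q ≤ r) (hrp : r ≤ p) (hp : p < N) :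
    w q (p + 1) - w q p ≤ w r (p + 1) - w r p := by
  induction r, hqr using Nat.le_induction with
  | base => exact le_rfl
  | succ r hqr ih => exact (ih (by omega)).trans (hw r p (by omega) hrp hp)

theorem triangle_of_monge_adjacent [AddCommGroup S] [PartialOrder S] [IsOrderedAddMonoid S]
    {w : ℕ → ℕ → S}
    (hw : ∀ q p, l ≤ q → q < p → p < N →
      w q (p + 1) - w q p ≤ w (q + 1) (p + 1) - w (q + 1) p)
    (hdiag : ∀ q, w q q = 0) {q r p : ℕ} (hq : l ≤ q) (hqr : q ≤ r) (hrp : r ≤ p) (hp : p ≤ N) :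
    w q p ≤ w q r + w r p := by
  induction p, hrp using Nat.le_induction with
  | base => simp [hdiag]
  | succ p hrp ih =>
    calc w q (p + 1) = w q p + (w q (p + 1) - w q p) := by abel
      _ ≤ (w q r + w r p) + (w r (p + 1) - w r p) :=
        add_le_add (ih (by omega)) (sub_le_sub_of_monge_adjacent hw hq hqr hrp hp)
      _ = w q r + w r (p + 1) := by abel

end Monge

section StrictLowerFiltration

variable {ι R S : Type*} [Semiring R]

variable (R) in
/-- The filtration of the strictly lower triangular matrices by a weight `w` on positions: at level
`m` only the entries `A p q` with `w q p ≤ m` may be nonzero. The column index comes first in `w`,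
matching the order of the two indices of a root. -/
def strictLowerFiltration [LT ι] [LE S] (w : ι → ι → S) (m : S) :
    Submodule R (Matrix ι ι R) where
  carrier := {A | ∀ p q, A p q ≠ 0 → q < p ∧ w q p ≤ m}
  zero_mem' := fun _ _ h => (h rfl).elim
  add_mem' {A B} hA hB p q h := by
    by_cases hApq : A p q = 0
    · exact hB p q fun hBpq => h (by simp [hApq, hBpq])
    · exact hA p q hApq
  smul_mem' _ _ hA p q h := hA p q (right_ne_zero_of_mul h)

theorem single_mem_strictLowerFiltration [LT ι] [DecidableEq ι] [LE S] {w : ι → ι → S} {m : S}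
    {p q : ι} (hqp : q < p) (hm : w q p ≤ m) (c : R) :
    Matrix.single p q c ∈ strictLowerFiltration R w m := by
  intro i j hij
  obtain ⟨rfl, rfl⟩ : p = i ∧ q = j := by
    by_contra h
    exact hij (Matrix.single_apply_of_ne _ _ _ _ _ h)
  exact ⟨hqp, hm⟩

theorem strictLowerFiltration_le_span [Finite ι] [DecidableEq ι] [LT ι] [LE S]
    (w : ι → ι → S) (m : S) :
    strictLowerFiltration R w m ≤
      Submodule.span R {M | ∃ p q, q < p ∧ w q p ≤ m ∧ M = Matrix.single p q 1} := by
  cases nonempty_fintype ι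
  intro A hA
  rw [Matrix.matrix_eq_sum_single A]
  refine Submodule.sum_mem _ fun p _ => Submodule.sum_mem _ fun q _ => ?_
  by_cases hpq : A p q = 0
  · simp [hpq]
  · obtain ⟨hqp, hm⟩ := hA p q hpq
    rw [← mul_one (A p q), ← smul_eq_mul, ← Matrix.smul_single]
    exact Submodule.smul_mem _ _ (Submodule.subset_span ⟨p, q, hqp, hm, rfl⟩)

theorem mul_mem_strictLowerFiltration [Fintype ι] [Preorder ι] [Add S] [Preorder S]
    [AddLeftMono S] [AddRightMono S] {w : ι → ι → S}
    (hw : ∀ ⦃q r p⦄, q < r → r < p → w q p ≤ w q r + w r p) {a b : S} {A B : Matrix ι ι R}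
    (hA : A ∈ strictLowerFiltration R w a) (hB : B ∈ strictLowerFiltration R w b) :
    A * B ∈ strictLowerFiltration R w (b + a) := by
  intro p q h
  obtain ⟨r, -, hr⟩ := Finset.exists_ne_zero_of_sum_ne_zero h
  obtain ⟨hrp, ha⟩ := hA p r (left_ne_zero_of_mul hr)
  obtain ⟨hqr, hb⟩ := hB r q (right_ne_zero_of_mul hr)
  exact ⟨hqr.trans hrp, (hw hqr hrp).trans (add_le_add hb ha)⟩

end StrictLowerFiltration

section Symplectic

variable {R : Type*} [CommRing R] {n : ℕ}

variable (R) in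
/-- The sign `ε_x` of a coordinate `x` of `R^{2n}`, numbered from `0`: `1` on the first half and
`-1` on the second. -/
def coordSign (x : Fin (2 * n)) : R :=
  if x.val < n then 1 else -1

theorem coordSign_mul_self (x : Fin (2 * n)) : coordSign R x * coordSign R x = 1 := by
  unfold coordSign
  split_ifs <;> ring

theorem coordSign_rev (x : Fin (2 * n)) : coordSign R x.rev = -coordSign R x := by
  unfold coordSign
  have := Fin.val_rev x
  split_ifs <;> first | omega | ring

variable (R n) in
/-- The Gram matrix of the symplectic form on `R^{2n}` pairing the coordinates `x` and `x.rev`. -/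
def sympForm : Matrix (Fin (2 * n)) (Fin (2 * n)) R :=
  Matrix.of fun p q => if p.rev = q then coordSign R p else 0

variable (R n) in
/-- The Lie algebra `sp_{2n}`, realised as the matrices skew-adjoint for `sympForm`. -/
abbrev sympMatrices : Submodule R (Matrix (Fin (2 * n)) (Fin (2 * n)) R) :=
  skewAdjointMatricesSubmodule (sympForm R n)

theorem mem_sympMatrices_iff {A : Matrix (Fin (2 * n)) (Fin (2 * n)) R} :
    A ∈ sympMatrices R n ↔
      ∀ p q, coordSign R p * coordSign R q * A q.rev p.rev = -A p q := by
  have h_left (p q) : (A.transpose * sympForm R n) p q = -coordSign R q * A q.rev p := by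
    simp [Matrix.mul_apply, sympForm, Fin.rev_eq_iff, ← coordSign_rev, mul_comm]
  have h_right (p q) : (sympForm R n * -A) p q = -coordSign R p * A p.rev q := by
    simp [Matrix.mul_apply, sympForm]
  rw [mem_skewAdjointMatricesSubmodule, Matrix.IsSkewAdjoint, Matrix.IsAdjointPair,
    ← Matrix.ext_iff, Fin.rev_surjective.forall]
  refine forall_congr' fun p => forall_congr' fun q => ?_
  rw [h_left, h_right, coordSign_rev, Fin.rev_rev]
  have hp := coordSign_mul_self (R := R) p
  constructor <;> intro h
  · linear_combination (-coordSign R p) * h - A p q * hp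
  · linear_combination (-coordSign R p) * h + coordSign R q * A q.rev p.rev * hp

/-- `A - A*`, where `A*` is the adjoint of `A` for the symplectic form: twice the projection of `A`
to `sp_{2n}`. -/
def skewPart : Matrix (Fin (2 * n)) (Fin (2 * n)) R →ₗ[R] Matrix (Fin (2 * n)) (Fin (2 * n)) R where
  toFun A := Matrix.of fun p q => A p q - coordSign R p * coordSign R q * A q.rev p.rev
  map_add' A B := by ext; simp only [Matrix.of_apply, Matrix.add_apply]; ring
  map_smul' c A := by
    ext; simp only [Matrix.of_apply, Matrix.smul_apply, smul_eq_mul, RingHom.id_apply]; ring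

theorem skewPart_apply (A : Matrix (Fin (2 * n)) (Fin (2 * n)) R) (p q : Fin (2 * n)) :
    skewPart A p q = A p q - coordSign R p * coordSign R q * A q.rev p.rev :=
  rfl

theorem skewPart_mem_sympMatrices (A : Matrix (Fin (2 * n)) (Fin (2 * n)) R) :
    skewPart A ∈ sympMatrices R n := by
  refine mem_sympMatrices_iff.2 fun p q => ?_
  simp only [skewPart_apply, coordSign_rev, Fin.rev_rev]
  linear_combination (-A p q) * coordSign_mul_self (R := R) p * coordSign R q * coordSign R q
    - A p q * coordSign_mul_self (R := R) q

theorem skewPart_eq_two_smul {A : Matrix (Fin (2 * n)) (Fin (2 * n)) R}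
    (hA : A ∈ sympMatrices R n) : skewPart A = (2 : R) • A := by
  ext p q
  rw [skewPart_apply, mem_sympMatrices_iff.1 hA, Matrix.smul_apply, smul_eq_mul]
  ring

theorem skewPart_single (p q : Fin (2 * n)) :
    skewPart (Matrix.single p q (1 : R)) =
      Matrix.single p q 1 - (coordSign R p * coordSign R q) • Matrix.single q.rev p.rev 1 := by
  ext i j
  simp only [skewPart_apply, Matrix.sub_apply, Matrix.smul_apply, Matrix.single_apply, smul_eq_mul]
  have h_reflect : p = j.rev ∧ q = i.rev ↔ q.rev = i ∧ p.rev = j := by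
    rw [Fin.rev_eq_iff, Fin.rev_eq_iff, and_comm]
  by_cases h : q.rev = i ∧ p.rev = j
  · obtain ⟨rfl, rfl⟩ := h
    simp [coordSign_rev, mul_comm]
  · rw [if_neg h, if_neg (mt h_reflect.1 h), mul_zero, mul_zero]

theorem skewPart_single_rev (p q : Fin (2 * n)) :
    skewPart (Matrix.single q.rev p.rev (1 : R)) =
      -(coordSign R p * coordSign R q) • skewPart (Matrix.single p q (1 : R)) := by
  simp only [skewPart_single, Fin.rev_rev, coordSign_rev, neg_smul, smul_sub, smul_smul]
  have h_sq : coordSign R p * coordSign R q * (coordSign R p * coordSign R q) = 1 := by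
    rw [mul_mul_mul_comm, coordSign_mul_self, coordSign_mul_self, one_mul]
  rw [neg_mul_neg, neg_mul, h_sq, mul_comm (coordSign R q)]
  module

end Symplectic

section EntryDegree

variable {n : ℕ} {d : SpRoot n → ℝ}

theorem dB_top (d : SpRoot n → ℝ) (i : ℕ) : dB d i n = dA d i n := by
  simp [dB, dA, rIdx]

/-- The degree of the matrix position in row `p` and column `q` (numbered from `1`): `0` on the
diagonal, invariant under reflection in the antidiagonal, and equal to the degree of the root whose
root vector occupies that position below the diagonal. -/
noncomputable def entryDegree (d : SpRoot n → ℝ) (q p : ℕ) : ℝ :=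
  if q = p then 0
  else if q + p ≤ 2 * n + 1 then lowDegree q p
  else lowDegree (2 * n + 1 - p) (2 * n + 1 - q)
where
  /-- The degree of a position on or above the antidiagonal. -/
  lowDegree (q p : ℕ) : ℝ := if p ≤ n then dA d q (p - 1) else dB d q (2 * n + 1 - p)

theorem entryDegree_self (d : SpRoot n → ℝ) (q : ℕ) : entryDegree d q q = 0 :=
  if_pos rfl

theorem entryDegree_reflect (d : SpRoot n → ℝ) {q p q' p' : ℕ} (hq : q + q' = 2 * n + 1)
    (hp : p + p' = 2 * n + 1) : entryDegree d p' q' = entryDegree d q p := by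
  obtain rfl : q' = 2 * n + 1 - q := by omega
  obtain rfl : p' = 2 * n + 1 - p := by omega
  have hqq : 2 * n + 1 - (2 * n + 1 - q) = q := by omega
  have hpp : 2 * n + 1 - (2 * n + 1 - p) = p := by omega
  unfold entryDegree
  rw [hqq, hpp]
  split_ifs
  any_goals omega
  any_goals rfl
  congr 1 <;> omega

theorem entryDegree_eq_dA (d : SpRoot n → ℝ) {i j : ℕ} (hij : i ≤ j) (hj : j ≤ n) :
    entryDegree d i (j + 1) = dA d i j := by
  rw [entryDegree, if_neg (by omega), if_pos (by omega), entryDegree.lowDegree]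
  split_ifs with hjn
  · rfl
  · obtain rfl : j = n := by omega
    rw [show 2 * j + 1 - (j + 1) = j by omega, dB_top]

theorem entryDegree_eq_dB (d : SpRoot n → ℝ) {i j p : ℕ} (hij : i ≤ j) (hj : j ≤ n)
    (hp : p + j = 2 * n + 1) : entryDegree d i p = dB d i j := by
  rw [entryDegree, if_neg (by omega), if_pos (by omega), entryDegree.lowDegree,
    if_neg (by omega), show 2 * n + 1 - p = j by omega]

theorem dA_facetA (hd : d ∈ Kcone n) {i : ℕ} (hi : 1 ≤ i) (hin : i < n) :
    dA d i (i + 1) ≤ dA d i i + dA d (i + 1) (i + 1) :=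
  hd (FacetKind.A, i, i + 1) (.inl ⟨rfl, hi, hin, rfl⟩)

theorem dA_facetB (hd : d ∈ Kcone n) {i j : ℕ} (hi : 1 ≤ i) (hij : i < j) (hjn : j < n) :
    dA d i (j + 1) + dA d (i + 1) j ≤ dA d i j + dA d (i + 1) (j + 1) :=
  hd (FacetKind.B, i, j) (.inr (.inl ⟨rfl, hi, hij, hjn⟩))

theorem dB_facetC (hd : d ∈ Kcone n) {i j : ℕ} (hi : 1 ≤ i) (hij : i < j) (hjn : j < n) :
    dB d i j + dB d (i + 1) (j + 1) ≤ dB d i (j + 1) + dB d (i + 1) j :=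
  hd (FacetKind.C, i, j) (.inr (.inr (.inl ⟨rfl, hi, hij, hjn⟩)))

theorem dB_facetD (hd : d ∈ Kcone n) {i : ℕ} (hi : 1 ≤ i) (hin : i < n) :
    dB d i i + dB d (i + 1) (i + 1) ≤ 2 * dB d i (i + 1) :=
  hd (FacetKind.D, i, i + 1) (.inr (.inr (.inr ⟨rfl, hi, hin, rfl⟩)))

theorem entryDegree_monge_of_le (hd : d ∈ Kcone n) {q p : ℕ} (hq : 1 ≤ q) (hqp : q < p)
    (hpn : p ≤ n) :
    entryDegree d q (p + 1) + entryDegree d (q + 1) p ≤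
      entryDegree d q p + entryDegree d (q + 1) (p + 1) := by
  obtain ⟨j, rfl⟩ : ∃ j, p = j + 1 := ⟨p - 1, by omega⟩
  rw [entryDegree_eq_dA d (by omega : q ≤ j + 1) hpn, entryDegree_eq_dA d (by omega : q ≤ j)
    (by omega), entryDegree_eq_dA d hqp hpn]
  obtain rfl | hqj : q = j ∨ q < j := by omega
  · rw [entryDegree_self, add_zero]
    exact dA_facetA hd hq hpn
  · rw [entryDegree_eq_dA d hqj (by omega)]
    exact dA_facetB hd hq hqj hpn

theorem entryDegree_monge_of_lt (hd : d ∈ Kcone n) {q p : ℕ} (hq : 1 ≤ q) (hnp : n < p)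
    (hqp : q + p ≤ 2 * n) :
    entryDegree d q (p + 1) + entryDegree d (q + 1) p ≤
      entryDegree d q p + entryDegree d (q + 1) (p + 1) := by
  obtain ⟨j, hj⟩ : ∃ j, p + j = 2 * n := ⟨2 * n - p, by omega⟩
  rw [entryDegree_eq_dB d (by omega : q ≤ j) (by omega) (by omega : p + 1 + j = 2 * n + 1),
    entryDegree_eq_dB d (by omega : q + 1 ≤ j + 1) (by omega) (by omega : p + (j + 1) = 2 * n + 1),
    entryDegree_eq_dB d (by omega : q ≤ j + 1) (by omega) (by omega : p + (j + 1) = 2 * n + 1)]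
  obtain rfl | hqj : q = j ∨ q < j := by omega
  · rw [entryDegree_reflect d (q := q) (p := p) (q' := p + 1) (p' := q + 1) (by omega) (by omega),
      entryDegree_eq_dB d (by omega : q ≤ q + 1) (by omega) (by omega : p + (q + 1) = 2 * n + 1)]
    linarith [dB_facetD hd hq (by omega)]
  · rw [entryDegree_eq_dB d hqj (by omega) (by omega : p + 1 + j = 2 * n + 1)]
    exact dB_facetC hd hq hqj (by omega)

theorem entryDegree_monge (hd : d ∈ Kcone n) {q p : ℕ} (hq : 1 ≤ q) (hqp : q < p)
    (hp : p < 2 * n) :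
    entryDegree d q (p + 1) + entryDegree d (q + 1) p ≤
      entryDegree d q p + entryDegree d (q + 1) (p + 1) := by
  have h_upper {q p : ℕ} (hq : 1 ≤ q) (hqp : q < p) (h : q + p ≤ 2 * n) :
      entryDegree d q (p + 1) + entryDegree d (q + 1) p ≤
        entryDegree d q p + entryDegree d (q + 1) (p + 1) := by
    obtain hpn | hnp := le_or_gt p n
    · exact entryDegree_monge_of_le hd hq hqp hpn
    · exact entryDegree_monge_of_lt hd hq hnp h
  obtain h | h := le_or_gt (q + p) (2 * n)
  · exact h_upper hq hqp h
  · obtain ⟨q', hq'⟩ : ∃ q', q + q' = 2 * n := ⟨2 * n - q, by omega⟩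
    obtain ⟨p', hp'⟩ : ∃ p', p + p' = 2 * n := ⟨2 * n - p, by omega⟩
    have h_reflected := h_upper (q := p') (p := q') (by omega) (by omega) (by omega)
    rw [entryDegree_reflect d (q := q) (p := p + 1) (q' := q' + 1) (p' := p') (by omega) (by omega),
      entryDegree_reflect d (q := q + 1) (p := p) (q' := q') (p' := p' + 1) (by omega) (by omega),
      entryDegree_reflect d (q := q + 1) (p := p + 1) (q' := q') (p' := p') (by omega) (by omega),
      entryDegree_reflect d (q := q) (p := p) (q' := q' + 1) (p' := p' + 1) (by omega) (by omega)]
      at h_reflected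
    linarith

/-- `entryDegree` as a weight on the positions of `Matrix (Fin (2 * n)) (Fin (2 * n))`, whose rows
and columns are numbered from `0`. -/
noncomputable def entryWeight (d : SpRoot n → ℝ) (q p : Fin (2 * n)) : ℝ :=
  entryDegree d (q + 1) (p + 1)

theorem entryWeight_rev (d : SpRoot n → ℝ) (q p : Fin (2 * n)) :
    entryWeight d p.rev q.rev = entryWeight d q p :=
  entryDegree_reflect d (by rw [Fin.val_rev]; omega) (by rw [Fin.val_rev]; omega)

theorem entryWeight_triangle (hd : d ∈ Kcone n) ⦃q r p : Fin (2 * n)⦄ (hqr : q < r) (hrp : r < p) :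
    entryWeight d q p ≤ entryWeight d q r + entryWeight d r p :=
  triangle_of_monge_adjacent (fun _ _ hq hqp hp => by linarith [entryDegree_monge hd hq hqp hp])
    (entryDegree_self d) (Nat.le_add_left _ _) (by omega) (by omega) p.isLt

theorem skewPart_mem_strictLowerFiltration {m : ℝ} {A : Matrix (Fin (2 * n)) (Fin (2 * n)) ℂ}
    (hA : A ∈ strictLowerFiltration ℂ (entryWeight d) m) :
    skewPart A ∈ strictLowerFiltration ℂ (entryWeight d) m := by
  intro p q h
  by_cases hpq : A p q = 0
  · have h_rev : A q.rev p.rev ≠ 0 := fun h_zero => h (by simp [skewPart_apply, hpq, h_zero])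
    simpa [entryWeight_rev] using hA _ _ h_rev
  · exact hA p q hpq

end EntryDegree

section RootVectors

variable {n : ℕ}

namespace SpRoot

/-- The column, numbered from `0`, of the leading nonzero entry of `f_β`. -/
def col (β : SpRoot n) : Fin (2 * n) :=
  ⟨β.val.1 - 1, by obtain ⟨h1, h2, h3, -⟩ := β.property; omega⟩

/-- The row, numbered from `0`, of the leading nonzero entry of `f_β`: `j` for `α_{i,j}` and
`2n - j` for `α_{i,j̄}`. -/
def row (β : SpRoot n) : Fin (2 * n) :=
  ⟨if β.val.2.2 then 2 * n - β.val.2.1 else β.val.2.1, by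
    obtain ⟨h1, h2, h3, -⟩ := β.property
    split_ifs <;> omega⟩

theorem col_lt_row (β : SpRoot n) : β.col < β.row := by
  obtain ⟨h1, h2, h3, -⟩ := β.property
  simp only [col, row, Fin.mk_lt_mk]
  split_ifs <;> omega

theorem exists_row_col {p q : Fin (2 * n)} (hqp : q < p) (h : q ≤ p.rev) :
    ∃ β : SpRoot n, β.row = p ∧ β.col = q := by
  have h' : (q : ℕ) + p + 1 ≤ 2 * n := by rw [Fin.le_def, Fin.val_rev] at h; omega
  obtain hp | hp := le_or_gt (p : ℕ) n
  · exact ⟨⟨(q + 1, p, false), Nat.le_add_left _ _, hqp, hp, nofun⟩, rfl, rfl⟩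
  · have h_row : 2 * n - (2 * n - (p : ℕ)) = p := Nat.sub_sub_self p.isLt.le
    exact ⟨⟨(q + 1, 2 * n - p, true), Nat.le_add_left _ _, by dsimp only; omega,
      by dsimp only; omega, fun _ => by dsimp only; omega⟩, Fin.ext h_row, rfl⟩

end SpRoot

theorem entryWeight_col_row (d : SpRoot n → ℝ) (β : SpRoot n) :
    entryWeight d β.col β.row = d β := by
  obtain ⟨⟨i, j, b⟩, hβ⟩ := β
  obtain ⟨hi, hij, hjn, hb⟩ := id hβ
  dsimp only at hi hij hjn hb
  have h_col : i - 1 + 1 = i := by omega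
  cases b with
  | false =>
    calc entryDegree d (i - 1 + 1) (j + 1) = dA d i j := by rw [h_col, entryDegree_eq_dA d hij hjn]
      _ = d ⟨(i, j, false), hβ⟩ := dif_pos hβ
  | true =>
    have hj := hb rfl
    calc entryDegree d (i - 1 + 1) (2 * n - j + 1) = dB d i j := by
          rw [h_col, entryDegree_eq_dB d hij hjn (by omega)]
      _ = dval d (i, j, true) := by rw [dB, rIdx, if_neg (by omega)]
      _ = d ⟨(i, j, true), hβ⟩ := dif_pos hβ

theorem single_eq_Emat (p q : Fin (2 * n)) :
    Matrix.single p q 1 = Emat n (p + 1) (q + 1) := by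
  ext i j
  simp [Matrix.single_apply, Emat, Fin.ext_iff, eq_comm]

theorem skewPart_single_eq_Emat (p q : Fin (2 * n)) :
    skewPart (Matrix.single p q 1) = Emat n (p + 1) (q + 1) -
      (coordSign ℂ p * coordSign ℂ q) • Emat n (2 * n - q) (2 * n - p) := by
  rw [skewPart_single, single_eq_Emat, single_eq_Emat, Fin.val_rev, Fin.val_rev,
    show 2 * n - (q + 1) + 1 = 2 * n - q by omega, show 2 * n - (p + 1) + 1 = 2 * n - p by omega]

/-- The factor `2` arises for the long roots, whose position is its own mirror image. -/
theorem skewPart_single_row_col (β : SpRoot n) :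
    skewPart (Matrix.single β.row β.col 1) =
      (if β.col = β.row.rev then (2 : ℂ) else 1) • fvec n β.val := by
  obtain ⟨⟨i, j, b⟩, hi, hij, hjn, hb⟩ := β
  dsimp only at hi hij hjn hb
  obtain ⟨k, rfl⟩ : ∃ k, i = k + 1 := ⟨i - 1, by omega⟩
  have h_refl : 2 * n + 1 - (k + 1) = 2 * n - k := by omega
  rw [skewPart_single_eq_Emat]
  cases b with
  | false =>
    have h_refl_row : 2 * n + 1 - (j + 1) = 2 * n - j := by omega
    simp only [SpRoot.row, SpRoot.col, coordSign, fvec, Fin.ext_iff, Fin.val_rev, h_refl,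
      h_refl_row, Nat.add_sub_cancel, Bool.false_eq_true, if_false]
    obtain hj | rfl := hjn.lt_or_eq
    · rw [if_pos hj, if_pos (by omega : k < n), if_neg (by omega), if_pos hj]
      module
    · rw [if_neg (by omega : ¬j < j), if_pos (by omega : k < j), if_neg (by omega : ¬j < j),
        show 2 * j - j = j by omega]
      obtain hk | rfl : k + 1 < j ∨ k + 1 = j := by omega
      · rw [if_neg (by omega), if_pos hk]
        module
      · rw [if_pos (by omega), if_neg (by omega), show 2 * (k + 1) - k = k + 1 + 1 by omega]
        module
  | true =>
    have hj := hb rfl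
    simp only [SpRoot.row, SpRoot.col, coordSign, fvec, Fin.ext_iff, Fin.val_rev, h_refl,
      Nat.add_sub_cancel, if_true]
    rw [if_neg (by omega : ¬2 * n - j < n), if_pos (by omega : k < n),
      show 2 * n - j + 1 = 2 * n + 1 - j by omega, show 2 * n - (2 * n - j) = j by omega]
    obtain hk | rfl : k + 1 < j ∨ k + 1 = j := by omega
    · rw [if_neg (by omega), if_neg (by omega)]
      module
    · rw [if_pos (by omega), if_pos rfl, h_refl]
      module

end RootVectors

section RootFiltration

variable {n : ℕ} {d : SpRoot n → ℝ}

/-- The subspace `(n₋)_{≤ m}^d` spanned by the root vectors of degree at most `m`. -/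
noncomputable def rootFiltration (d : SpRoot n → ℝ) (m : ℝ) :
    Submodule ℂ (Matrix (Fin (2 * n)) (Fin (2 * n)) ℂ) :=
  Submodule.span ℂ {M | ∃ β : SpRoot n, d β ≤ m ∧ M = fvec n β.val}

theorem skewPart_single_mem_rootFiltration {m : ℝ} {p q : Fin (2 * n)} (hqp : q < p)
    (hm : entryWeight d q p ≤ m) :
    skewPart (Matrix.single p q 1) ∈ rootFiltration d m := by
  have h_upper {p q : Fin (2 * n)} (hqp : q < p) (h : q ≤ p.rev) (hm : entryWeight d q p ≤ m) :
      skewPart (Matrix.single p q 1) ∈ rootFiltration d m := by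
    obtain ⟨β, rfl, rfl⟩ := SpRoot.exists_row_col hqp h
    rw [skewPart_single_row_col]
    rw [entryWeight_col_row] at hm
    exact Submodule.smul_mem _ _ (Submodule.subset_span ⟨β, hm, rfl⟩)
  obtain h | h := le_total q p.rev
  · exact h_upper hqp h hm
  · rw [← Fin.rev_rev p, ← Fin.rev_rev q, skewPart_single_rev]
    refine Submodule.smul_mem _ _ (h_upper (Fin.rev_lt_rev.2 hqp) ?_ ?_)
    · rwa [Fin.rev_rev]
    · rwa [entryWeight_rev]

theorem rootFiltration_eq_inf (d : SpRoot n → ℝ) (m : ℝ) :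
    rootFiltration d m =
      strictLowerFiltration ℂ (entryWeight d) m ⊓ sympMatrices ℂ n := by
  refine le_antisymm (Submodule.span_le.2 ?_) ?_
  · rintro _ ⟨β, hβ, rfl⟩
    have h_coeff : (if β.col = β.row.rev then (2 : ℂ) else 1) ≠ 0 := by split_ifs <;> norm_num
    rw [SetLike.mem_coe, ← Submodule.smul_mem_iff _ h_coeff, ← skewPart_single_row_col]
    exact ⟨skewPart_mem_strictLowerFiltration (single_mem_strictLowerFiltration β.col_lt_row
      ((entryWeight_col_row d β).trans_le hβ) 1), skewPart_mem_sympMatrices _⟩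
  · rintro A ⟨hA, hA_skew⟩
    have h_map : (strictLowerFiltration ℂ (entryWeight d) m).map skewPart ≤ rootFiltration d m := by
      refine (Submodule.map_mono (strictLowerFiltration_le_span _ _)).trans ?_
      rw [Submodule.map_span_le]
      rintro _ ⟨p, q, hqp, hm, rfl⟩
      exact skewPart_single_mem_rootFiltration hqp hm
    have h_two : (2 : ℂ) • A ∈ rootFiltration d m :=
      skewPart_eq_two_smul hA_skew ▸ h_map (Submodule.mem_map_of_mem hA)
    exact (Submodule.smul_mem_iff _ two_ne_zero).1 h_two

theorem commutator_mem_rootFiltration (hd : d ∈ Kcone n) {a b : ℝ}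
    {X Y : Matrix (Fin (2 * n)) (Fin (2 * n)) ℂ} (hX : X ∈ rootFiltration d a)
    (hY : Y ∈ rootFiltration d b) : X * Y - Y * X ∈ rootFiltration d (a + b) := by
  rw [rootFiltration_eq_inf] at hX hY ⊢
  have hw := entryWeight_triangle hd
  have hXY := mul_mem_strictLowerFiltration hw hX.1 hY.1
  rw [add_comm] at hXY
  have hYX := mul_mem_strictLowerFiltration hw hY.1 hX.1
  exact ⟨Submodule.sub_mem _ hXY hYX, Matrix.isSkewAdjoint_bracket _ hX.2 hY.2⟩

end RootFiltration

/-- For `d ∈ K_{2n}` and `a, b ∈ ℝ`, every commutator `XY - YX` with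
`X ∈ span{f_β : d(β) ≤ a}` and `Y ∈ span{f_β : d(β) ≤ b}` lies in
`span{f_β : d(β) ≤ a + b}`: the subspaces `(n₋)^d_{≤ m}` form an ℝ-filtration of the Lie
algebra spanned by the root vectors. -/
theorem spFFLV_filtration (n : ℕ) (hn : 2 ≤ n) (d : SpRoot n → ℝ) (hd : d ∈ Kcone n)
    (a b : ℝ) :
    ∀ X ∈ Submodule.span ℂ
        {M : Matrix (Fin (2*n)) (Fin (2*n)) ℂ | ∃ β : SpRoot n, d β ≤ a ∧ M = fvec n β.val},
    ∀ Y ∈ Submodule.span ℂ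
        {M : Matrix (Fin (2*n)) (Fin (2*n)) ℂ | ∃ β : SpRoot n, d β ≤ b ∧ M = fvec n β.val},
      X * Y - Y * X ∈ Submodule.span ℂ
        {M : Matrix (Fin (2*n)) (Fin (2*n)) ℂ | ∃ β : SpRoot n, d β ≤ a + b ∧ M = fvec n β.val} := by
  exact fun _ hX _ hY => commutator_mem_rootFiltration hd hX hY
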